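/- Let k be a positive integer and let C be a self-dual Z4-code of length 24k whose minimum Lee weight d_L(C) equals 8k+4 or 8k+2. Then the residue code C^(1) is a binary extremal doubly even self-dual code of length 24k, i.e., C^(1) equals its own dual, every codeword of C^(1) has Hamming weight divisible by 4, and the minimum Hamming weight of C^(1) is 4k+4. -/

import Mathlib

open Finset

namespace Z4Note

variable {ι : Type*} [Fintype ι]

/-- Hamming weight of a binary vector. -/
def hWt (x : ι → ZMod 2) : ℕ := (Finset.univ.filter fun i => x i ≠ 0).card

/-- Lee value of an element of `ZMod 4`:  0 ↦ 0, 1 ↦ 1, 2 ↦ 2, 3 ↦ 1. -/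
def leeVal (a : ZMod 4) : ℕ := min a.val (4 - a.val)

/-- Lee weight `n₁(x) + 2 n₂(x) + n₃(x)`. -/
def leeWt (x : ι → ZMod 4) : ℕ := ∑ i, leeVal (x i)

/-- Euclidean weight `n₁(x) + 4 n₂(x) + n₃(x)`. -/
def eucWt (x : ι → ZMod 4) : ℕ := ∑ i, (leeVal (x i)) ^ 2

/-- Number of coordinates of `x` equal to `a`. -/
def nCount (a : ZMod 4) (x : ι → ZMod 4) : ℕ := (Finset.univ.filter fun i => x i = a).card

/-- Dual of a `ZMod 4`-code (as a set), w.r.t. the standard inner product. -/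
def dualZ4 (C : Set (ι → ZMod 4)) : Set (ι → ZMod 4) :=
  {x | ∀ y ∈ C, ∑ i, x i * y i = 0}

/-- Dual of a binary code (as a set), w.r.t. the standard inner product. -/
def dual2 (C : Set (ι → ZMod 2)) : Set (ι → ZMod 2) :=
  {x | ∀ y ∈ C, ∑ i, x i * y i = 0}

/-- A `ZMod 4`-code is self-dual if it equals its dual. -/
def SelfDualZ4 (C : Submodule (ZMod 4) (ι → ZMod 4)) : Prop :=
  (C : Set (ι → ZMod 4)) = dualZ4 (C : Set (ι → ZMod 4))

/-- A binary code is self-dual if it equals its dual. -/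
def SelfDual2 (D : Submodule (ZMod 2) (ι → ZMod 2)) : Prop :=
  (D : Set (ι → ZMod 2)) = dual2 (D : Set (ι → ZMod 2))

/-- Coordinatewise reduction modulo 2. -/
def res2 (x : ι → ZMod 4) : ι → ZMod 2 :=
  fun i => ZMod.castHom (by norm_num : (2:ℕ) ∣ 4) (ZMod 2) (x i)

/-- The residue code `C⁽¹⁾ = {c mod 2 : c ∈ C}`. -/
def residue (C : Set (ι → ZMod 4)) : Set (ι → ZMod 2) := res2 '' C

/-- Minimum Lee weight among nonzero codewords. -/
noncomputable def minLee (C : Set (ι → ZMod 4)) : ℕ := sInf {d | ∃ x ∈ C, x ≠ 0 ∧ leeWt x = d}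

/-- Minimum Euclidean weight among nonzero codewords. -/
noncomputable def minEuc (C : Set (ι → ZMod 4)) : ℕ := sInf {d | ∃ x ∈ C, x ≠ 0 ∧ eucWt x = d}

/-- Minimum Hamming weight among nonzero codewords of a binary code. -/
noncomputable def minHam (C : Set (ι → ZMod 2)) : ℕ := sInf {d | ∃ x ∈ C, x ≠ 0 ∧ hWt x = d}

/-- A binary code is doubly even if all weights are divisible by 4. -/
def DoublyEven (C : Set (ι → ZMod 2)) : Prop := ∀ x ∈ C, 4 ∣ hWt x

/-- A binary code is singly even if some codeword has weight not divisible by 4. -/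
def SinglyEven (C : Set (ι → ZMod 2)) : Prop := ∃ x ∈ C, ¬ 4 ∣ hWt x

/-- A self-dual `ZMod 4`-code is Type II if all Euclidean weights are divisible by 8. -/
def TypeII (C : Set (ι → ZMod 4)) : Prop := ∀ x ∈ C, 8 ∣ eucWt x

/-- The doubly even subcode of a binary code. -/
def evenSubcode (D : Set (ι → ZMod 2)) : Set (ι → ZMod 2) := {x ∈ D | 4 ∣ hWt x}

/-- The shadow `S = D₀^⊥ \ D` of a binary code. -/
def shadow (D : Set (ι → ZMod 2)) : Set (ι → ZMod 2) := dual2 (evenSubcode D) \ D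

/-- A binary singly even self-dual code is s-extremal if equality holds in the
Bachoc–Gaborit bound relating the minimum weight of the code and of its shadow. -/
def SExtremal (D : Submodule (ZMod 2) (ι → ZMod 2)) : Prop :=
  SelfDual2 D ∧ SinglyEven (D : Set (ι → ZMod 2)) ∧
  ((¬ (Fintype.card ι % 24 = 22 ∧
        minHam (D : Set (ι → ZMod 2)) = 4 * (Fintype.card ι / 24) + 6)) →
      minHam (shadow (D : Set (ι → ZMod 2))) + 2 * minHam (D : Set (ι → ZMod 2)) =
        Fintype.card ι / 2 + 4) ∧
  ((Fintype.card ι % 24 = 22 ∧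
        minHam (D : Set (ι → ZMod 2)) = 4 * (Fintype.card ι / 24) + 6) →
      minHam (shadow (D : Set (ι → ZMod 2))) + 2 * minHam (D : Set (ι → ZMod 2)) =
        Fintype.card ι / 2 + 8)

/-- Equivalence of `ZMod 4`-codes: coordinate permutation together with sign changes. -/
def Z4Equiv (C C' : Set (ι → ZMod 4)) : Prop :=
  ∃ σ : Equiv.Perm ι, ∃ ε : ι → ZMod 4, (∀ i, ε i = 1 ∨ ε i = -1) ∧
    C' = (fun x => fun i => ε i * x (σ i)) '' C

/-- Covering radius of a binary code. -/
noncomputable def covRad (C : Set (ι → ZMod 2)) : ℕ :=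
  sInf {R | ∀ v : ι → ZMod 2, ∃ c ∈ C, hWt (v - c) ≤ R}

/-- Entry `(i,j)` of the circulant matrix with first row `r`. -/
def circEntry {m : ℕ} (r : Fin m → ZMod 4) (i j : Fin m) : ZMod 4 := r (j - i)

/-- Entry `(i,j)` of the negacirculant matrix with first row `r`. -/
def negaEntry {m : ℕ} (r : Fin m → ZMod 4) (i j : Fin m) : ZMod 4 :=
  if i.val ≤ j.val then r (j - i) else - r (j - i)

/-- The bordered part `B` of the generator matrix of a bordered double circulant code. -/
def bdcB {m : ℕ} (α β γ : ZMod 4) (r : Fin m → ZMod 4) :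
    Fin (m+1) → Fin (m+1) → ZMod 4 :=
  Fin.cases (Fin.cases α fun _ => β) (fun i' => Fin.cases γ fun j' => circEntry r i' j')

/-- Row `i` of the generator matrix `(I | B)` of a bordered double circulant code. -/
def bdcRow {m : ℕ} (α β γ : ZMod 4) (r : Fin m → ZMod 4) (i : Fin (m+1)) :
    (Fin (m+1) ⊕ Fin (m+1)) → ZMod 4 :=
  Sum.elim (fun j => if j = i then 1 else 0) (bdcB α β γ r i)

/-- The bordered double circulant code of length `2(m+1)`. -/
def bdcCode {m : ℕ} (α β γ : ZMod 4) (r : Fin m → ZMod 4) :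
    Submodule (ZMod 4) ((Fin (m+1) ⊕ Fin (m+1)) → ZMod 4) :=
  Submodule.span (ZMod 4) (Set.range (bdcRow α β γ r))

/-- The block matrix `[[A, B], [-Bᵀ, Aᵀ]]` built from negacirculant `A`, `B`. -/
def fourNegaM {n : ℕ} (a b : Fin n → ZMod 4) :
    (Fin n ⊕ Fin n) → (Fin n ⊕ Fin n) → ZMod 4
  | Sum.inl i, Sum.inl j => negaEntry a i j
  | Sum.inl i, Sum.inr j => negaEntry b i j
  | Sum.inr i, Sum.inl j => - negaEntry b j i
  | Sum.inr i, Sum.inr j => negaEntry a j i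

/-- Row `i` of the generator matrix `(I | M)` of a four-negacirculant code. -/
def fourNegaRow {n : ℕ} (a b : Fin n → ZMod 4) (i : Fin n ⊕ Fin n) :
    ((Fin n ⊕ Fin n) ⊕ (Fin n ⊕ Fin n)) → ZMod 4 :=
  Sum.elim (fun j => if j = i then 1 else 0) (fourNegaM a b i)

/-- The four-negacirculant code of length `4n`. -/
def fourNegaCode {n : ℕ} (a b : Fin n → ZMod 4) :
    Submodule (ZMod 4) (((Fin n ⊕ Fin n) ⊕ (Fin n ⊕ Fin n)) → ZMod 4) :=
  Submodule.span (ZMod 4) (Set.range (fourNegaRow a b))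

end Z4Note

/-!
Since `C` is self-dual, its residue code `B` is doubly even, and twice the dual of `B` lies in `C`;
the bound on the Lee weight therefore makes every nonzero word of `B⊥` have weight at least
`4k + 1`. By the MacWilliams identity this says that, up to scaling, the weight enumerator of `B`
agrees to order `4k + 1` at `y = 1` with every polynomial satisfying the functional equation of a
self-dual code and of the form `1 + O(y ^ (4k + 4))`. Gleason's invariants produce such a
polynomial. Both enumerators are palindromic polynomials in `y ^ 4` without low terms, so their
scaled difference has at most `4k + 1` monomials, and by Descartes' rule of signs it cannot vanish
to order `4k + 1` at `y = 1` unless it is zero. Comparing constant terms gives `|B| = 2 ^ (12k)`, so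
`B` is self-dual, and Lagrange inversion shows that the coefficient of `y ^ (4k + 4)` does not
vanish.
-/

namespace Z4Note

section BinaryCodes

variable {ι : Type*} [Fintype ι]

theorem hWt_eq_zero {x : ι → ZMod 2} : hWt x = 0 ↔ x = 0 := hammingNorm_eq_zero

theorem hWt_le_card (x : ι → ZMod 2) : hWt x ≤ Fintype.card ι := hammingNorm_le_card_fintype

theorem hWt_eq_sum (x : ι → ZMod 2) : hWt x = ∑ i, (x i).val := by
  rw [hWt, card_filter]
  exact sum_congr rfl fun i _ => by generalize x i = a; decide +revert

theorem sum_eq_hWt (x : ι → ZMod 2) : ∑ i, x i = (hWt x : ZMod 2) := by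
  simp [hWt_eq_sum]

theorem hWt_add_add_two_mul_hWt_mul (x y : ι → ZMod 2) :
    hWt (x + y) + 2 * hWt (x * y) = hWt x + hWt y := by
  simp only [hWt_eq_sum, mul_sum, ← sum_add_distrib, Pi.add_apply, Pi.mul_apply]
  exact sum_congr rfl fun i _ => by generalize x i = a, y i = b; decide +revert

theorem hWt_one_add_add_hWt (x : ι → ZMod 2) : hWt (1 + x) + hWt x = Fintype.card ι := by
  have h : ∀ a : ZMod 2, (1 + a).val + a.val = 1 := by decide
  simp [hWt_eq_sum, ← sum_add_distrib, h]

theorem prod_ite_eq_zero_eq_pow_mul_pow {M : Type*} [CommMonoid M] (a b : M) (x : ι → ZMod 2) :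
    ∏ i, (if x i = 0 then a else b) = a ^ (Fintype.card ι - hWt x) * b ^ hWt x := by
  have hcard := card_filter_add_card_filter_not (s := univ) (x · = 0)
  rw [prod_ite, prod_const, prod_const, hWt, ← card_univ, ← hcard, Nat.add_sub_cancel]

theorem sum_mul_eq_zero_iff_even_hWt_mul {x y : ι → ZMod 2} :
    ∑ i, x i * y i = 0 ↔ Even (hWt (x * y)) := by
  rw [even_iff_two_dvd, ← ZMod.natCast_eq_zero_iff, ← sum_eq_hWt]; rfl

theorem DoublyEven.subset_dual2 {B : Submodule (ZMod 2) (ι → ZMod 2)}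
    (hB : DoublyEven (B : Set (ι → ZMod 2))) :
    (B : Set (ι → ZMod 2)) ⊆ dual2 (B : Set (ι → ZMod 2)) := by
  intro x hx y hy
  have hxy := hWt_add_add_two_mul_hWt_mul x y
  have h₁ := hB x hx
  have h₂ := hB y hy
  have h₃ := hB _ (B.add_mem hx hy)
  rw [sum_mul_eq_zero_iff_even_hWt_mul, even_iff_two_dvd]
  omega

theorem DoublyEven.one_add_mem_dual2 {S : Set (ι → ZMod 2)} (hS : DoublyEven S)
    {x : ι → ZMod 2} (hx : x ∈ dual2 S) : 1 + x ∈ dual2 S := by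
  intro y hy
  have hxy : ∑ i, x i * y i = 0 := hx y hy
  have h2 : 2 ∣ hWt y := (by norm_num : 2 ∣ 4).trans (hS y hy)
  simp only [Pi.add_apply, Pi.one_apply, add_mul, one_mul, sum_add_distrib]
  rw [hxy, add_zero, sum_eq_hWt, (ZMod.natCast_eq_zero_iff _ _).mpr h2]

open scoped Classical in
theorem sum_neg_one_pow_hWt_mul {R : Type*} [CommRing R] (B : Submodule (ZMod 2) (ι → ZMod 2))
    (u : ι → ZMod 2) :
    ∑ c with c ∈ B, (-1 : R) ^ hWt (u * c) =
      if u ∈ dual2 (B : Set (ι → ZMod 2)) then (Nat.card B : R) else 0 := by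
  suffices h : ∑ c with c ∈ B, (-1 : ℤ) ^ hWt (u * c) =
      if u ∈ dual2 (B : Set (ι → ZMod 2)) then (Nat.card B : ℤ) else 0 by
    simpa using congrArg (Int.cast : ℤ → R) h
  let ψ : AddChar B ℤ := (AddChar.zmodChar 2 neg_one_sq).compAddMonoidHom
    ((dotProductBilin (ZMod 2) (ZMod 2) u).comp B.subtype).toAddMonoidHom
  have hψ (c : B) : ψ c = (-1) ^ hWt (u * (c : ι → ZMod 2)) := by
    have hdot : u ⬝ᵥ c = (hWt (u * (c : ι → ZMod 2)) : ZMod 2) := sum_eq_hWt _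
    simp [ψ, hdot, AddChar.zmodChar_apply']
  have hψ_eq_zero : ψ = 0 ↔ u ∈ dual2 (B : Set (ι → ZMod 2)) := by
    simp [AddChar.eq_zero_iff, hψ, neg_one_pow_eq_one_iff_even, dual2,
      sum_mul_eq_zero_iff_even_hWt_mul]
  rw [sum_subtype (p := (· ∈ B)) (F := inferInstance) _ (by simp)]
  simp only [← hψ, ← hψ_eq_zero, Nat.card_eq_fintype_card]
  exact AddChar.sum_eq_ite ψ

end BinaryCodes

section WeightEnumerators

variable {ι : Type*} [Fintype ι] {R : Type*} [CommRing R]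

open scoped Classical in
/-- The homogeneous weight enumerator `∑ a ^ (n - wt c) * b ^ wt c` of a binary code of length `n`,
evaluated at two elements of a commutative ring; the one-variable enumerator is its value at
`1` and `X`. -/
noncomputable def weightEnum (S : Set (ι → ZMod 2)) (a b : R) : R :=
  ∑ c with c ∈ S, a ^ (Fintype.card ι - hWt c) * b ^ hWt c

theorem macWilliams (B : Submodule (ZMod 2) (ι → ZMod 2)) (a b : R) :
    weightEnum (B : Set (ι → ZMod 2)) (a + b) (a - b) =
      Nat.card B * weightEnum (dual2 (B : Set (ι → ZMod 2))) a b := by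
  classical
  have hexpand (c : ι → ZMod 2) :
      (a + b) ^ (Fintype.card ι - hWt c) * (a - b) ^ hWt c =
        ∑ u : ι → ZMod 2, (-1) ^ hWt (u * c) * (a ^ (Fintype.card ι - hWt u) * b ^ hWt u) := by
    have hfactor (t : ZMod 2) : (if t = 0 then a + b else a - b) =
        ∑ s : ZMod 2, (if s * t = 0 then 1 else -1) * (if s = 0 then a else b) := by
      rw [show (univ : Finset (ZMod 2)) = {0, 1} from rfl, sum_pair zero_ne_one]
      obtain rfl | rfl : t = 0 ∨ t = 1 := by decide +revert
      all_goals simp [sub_eq_add_neg]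
    simp only [← prod_ite_eq_zero_eq_pow_mul_pow, hfactor, Fintype.prod_sum, prod_mul_distrib]
    simp only [← Pi.mul_apply, prod_ite_eq_zero_eq_pow_mul_pow, one_pow, one_mul]
  simp only [weightEnum, hexpand, mul_sum]
  rw [sum_comm, sum_filter]
  refine sum_congr rfl fun u _ => ?_
  rw [← sum_mul]
  have := sum_neg_one_pow_hWt_mul (R := R) B u
  simp only [SetLike.mem_coe, this, ite_mul, zero_mul]

theorem weightEnum_mul_mul (S : Set (ι → ZMod 2)) (r a b : R) :
    weightEnum S (r * a) (r * b) = r ^ Fintype.card ι * weightEnum S a b := by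
  simp only [weightEnum, mul_sum]
  refine sum_congr rfl fun c _ => ?_
  nth_rw 2 [← Nat.sub_add_cancel (hWt_le_card c)]
  ring

theorem weightEnum_one_one (S : Set (ι → ZMod 2)) : weightEnum S (1 : R) 1 = Nat.card S := by
  classical
  simp [weightEnum, Fintype.card_subtype]

theorem pow_dvd_weightEnum_sub_pow {S : Set (ι → ZMod 2)} {d : ℕ} (h0 : 0 ∈ S)
    (hd : ∀ u ∈ S, u ≠ 0 → d ≤ hWt u) (a b : R) :
    b ^ d ∣ weightEnum S a b - a ^ Fintype.card ι := by
  classical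
  rw [weightEnum, ← add_sum_erase _ _ (mem_filter.mpr ⟨mem_univ 0, h0⟩), hWt_eq_zero.mpr rfl,
    pow_zero, mul_one, Nat.sub_zero, add_sub_cancel_left]
  refine dvd_sum fun u hu => (pow_dvd_pow b (hd u ?_ ?_)).mul_left _
  · exact (mem_filter.mp (mem_of_mem_erase hu)).2
  · exact ne_of_mem_erase hu

theorem dvd_weightEnum_sub_pow {S : Set (ι → ZMod 2)} (h0 : 0 ∈ S) (a b : R) :
    b ∣ weightEnum S a b - a ^ Fintype.card ι := by
  simpa using pow_dvd_weightEnum_sub_pow (d := 1) h0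
    (fun u _ hu => Nat.one_le_iff_ne_zero.mpr (mt hWt_eq_zero.mp hu)) a b

theorem zero_mem_dual2 (S : Set (ι → ZMod 2)) : 0 ∈ dual2 S := fun y _ => by simp

theorem card_mul_card_dual2 (B : Submodule (ZMod 2) (ι → ZMod 2)) :
    Nat.card B * Nat.card (dual2 (B : Set (ι → ZMod 2))) = 2 ^ Fintype.card ι := by
  have hmac := macWilliams B (1 : ℤ) 1
  have hzero : weightEnum (B : Set (ι → ZMod 2)) (2 : ℤ) 0 = 2 ^ Fintype.card ι := by
    have h := dvd_weightEnum_sub_pow B.zero_mem (2 : ℤ) 0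
    rwa [zero_dvd_iff, sub_eq_zero] at h
  rw [one_add_one_eq_two, sub_self, hzero, weightEnum_one_one] at hmac
  exact_mod_cast hmac.symm

theorem eq_dual2_of_card_mul_self {B : Submodule (ZMod 2) (ι → ZMod 2)}
    (hB : (B : Set (ι → ZMod 2)) ⊆ dual2 (B : Set (ι → ZMod 2)))
    (hcard : Nat.card B * Nat.card B = 2 ^ Fintype.card ι) :
    (B : Set (ι → ZMod 2)) = dual2 (B : Set (ι → ZMod 2)) := by
  refine Set.eq_of_subset_of_ncard_le hB (le_of_eq ?_)
  exact Nat.eq_of_mul_eq_mul_left Nat.card_pos ((card_mul_card_dual2 B).trans hcard.symm)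

open Polynomial

theorem two_pow_mul_weightEnum_one_X (B : Submodule (ZMod 2) (ι → ZMod 2)) :
    2 ^ Fintype.card ι * weightEnum (B : Set (ι → ZMod 2)) 1 (X : R[X]) =
      Nat.card B * weightEnum (dual2 (B : Set (ι → ZMod 2))) (1 + X : R[X]) (1 - X) := by
  rw [← macWilliams, ← weightEnum_mul_mul]
  congr 1 <;> ring

open scoped Classical in
theorem coeff_weightEnum_one_X (S : Set (ι → ZMod 2)) (j : ℕ) :
    (weightEnum S 1 (X : R[X])).coeff j = #{c | c ∈ S ∧ hWt c = j} := by
  simp [weightEnum, coeff_X_pow, filter_filter, eq_comm]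

end WeightEnumerators

section SparsePolynomials

open Polynomial

theorem signVariations_lt_card_support {R : Type*} [Semiring R] [LinearOrder R] {p : R[X]}
    (hp : p ≠ 0) :
    signVariations p < p.support.card := by
  induction hn : p.support.card using Nat.strong_induction_on generalizing p with | _ n ih
  subst hn
  have hcard := card_support_eraseLead_add_one hp
  by_cases h : p.eraseLead = 0
  · obtain ⟨d, a, rfl⟩ := card_support_le_one_iff_monomial.mp
      (show p.support.card ≤ 1 by simp [← hcard, h])
    simpa [Nat.pos_iff_ne_zero] using hp
  · have := ih _ (by omega) h rfl
    have := signVariations_le_eraseLead_succ (P := p)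
    omega

theorem eq_zero_of_X_sub_C_pow_dvd_of_card_support_le {R : Type*} [CommRing R] [LinearOrder R]
    [IsStrictOrderedRing R] {p : R[X]} {η : R} (hη : 0 < η) {m : ℕ} (hdvd : (X - C η) ^ m ∣ p)
    (hcard : p.support.card ≤ m) : p = 0 := by
  by_contra hp
  have hroots : Multiset.replicate m η ≤ p.roots := by
    rw [← Multiset.le_count_iff_replicate_le, count_roots]
    exact (le_rootMultiplicity_iff hp).mpr hdvd
  have hpos : m ≤ p.roots.countP (0 < ·) := calc
    m = (Multiset.replicate m η).countP (0 < ·) := by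
      rw [Multiset.countP_eq_card.mpr (by simp [Multiset.mem_replicate, hη]),
        Multiset.card_replicate]
    _ ≤ p.roots.countP (0 < ·) := Multiset.countP_le_of_le _ hroots
  have := roots_countP_pos_le_signVariations p
  have := signVariations_lt_card_support hp
  omega

end SparsePolynomials

section FormallySelfDual

open Polynomial

variable {R : Type*} [CommRing R]

theorem X_zero_pow_dvd_homogenize {p : R[X]} {m n : ℕ} (hm : X ^ m ∣ p) (hn : p.natDegree ≤ n) :
    MvPolynomial.X 0 ^ m ∣ p.homogenize n := by
  nontriviality R
  obtain rfl | hp := eq_or_ne p 0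
  · simp
  obtain ⟨q, rfl⟩ := hm
  rw [mul_comm, natDegree_mul_X_pow _ (right_ne_zero_of_mul hp)] at hn
  obtain ⟨l, rfl⟩ := Nat.exists_eq_add_of_le' hn
  rw [← add_assoc, add_comm, homogenize_mul _ _ (natDegree_X_pow m).le (by omega),
    homogenize_X_pow le_rfl, Nat.sub_self, pow_zero, mul_one]
  exact dvd_mul_right _ _

/-- `IsFormallySelfDual N p` says that `p(y⁴)` has the symmetries of the weight enumerator of a
doubly even self-dual binary code of length `4N`: it is palindromic and satisfies the MacWilliams
identity `(1 + y)^(4N) p(((1 - y) / (1 + y))⁴) = 4^N p(y⁴)`. Homogenization clears the denominator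
of the latter. -/
structure IsFormallySelfDual (N : ℕ) (p : R[X]) : Prop where
  natDegree_le : p.natDegree ≤ N
  reflect_eq : p.reflect N = p
  aeval_homogenize : MvPolynomial.aeval ![(1 - X : R[X]) ^ 4, (1 + X) ^ 4] (p.homogenize N) =
    4 ^ N * expand R 4 p

namespace IsFormallySelfDual

variable {M N : ℕ} {p q : R[X]}

theorem mul (hp : IsFormallySelfDual M p) (hq : IsFormallySelfDual N q) :
    IsFormallySelfDual (M + N) (p * q) where
  natDegree_le := natDegree_mul_le_of_le hp.natDegree_le hq.natDegree_le
  reflect_eq := by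
    rw [reflect_mul _ _ hp.natDegree_le hq.natDegree_le, hp.reflect_eq, hq.reflect_eq]
  aeval_homogenize := by
    rw [homogenize_mul _ _ hp.natDegree_le hq.natDegree_le, map_mul, map_mul,
      hp.aeval_homogenize, hq.aeval_homogenize, pow_add, mul_mul_mul_comm]

theorem one : IsFormallySelfDual 0 (1 : R[X]) where
  natDegree_le := by simp
  reflect_eq := by simp
  aeval_homogenize := by simp

theorem pow (hp : IsFormallySelfDual N p) (n : ℕ) : IsFormallySelfDual (N * n) (p ^ n) := by
  induction n with
  | zero => simpa using one
  | succ n ih => simpa only [pow_succ, mul_add_one] using ih.mul hp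

theorem sum_C_mul {σ : Type*} {s : Finset σ} {f : σ → R[X]} (a : σ → R)
    (hf : ∀ i ∈ s, IsFormallySelfDual N (f i)) :
    IsFormallySelfDual N (∑ i ∈ s, C (a i) * f i) where
  natDegree_le := natDegree_sum_le_of_forall_le _ _ fun i hi =>
    (natDegree_C_mul_le _ _).trans (hf i hi).natDegree_le
  reflect_eq := by
    ext j
    simp only [coeff_reflect, finsetSum_coeff, coeff_C_mul]
    refine sum_congr rfl fun i hi => ?_
    rw [← coeff_reflect, (hf i hi).reflect_eq]
  aeval_homogenize := by
    simp only [homogenize_finsetSum, homogenize_C_mul, map_sum, map_mul, mul_sum]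
    refine sum_congr rfl fun i hi => ?_
    rw [(hf i hi).aeval_homogenize, MvPolynomial.aeval_C, expand_C]
    exact mul_left_comm _ _ _

theorem eq_zero_or_eq_or_le_of_coeff_ne_zero (hp : IsFormallySelfDual N p) {m : ℕ}
    (hm : X ^ m ∣ p - 1) {j : ℕ} (hj : p.coeff j ≠ 0) : j = 0 ∨ j = N ∨ m ≤ j ∧ j + m ≤ N := by
  have hlow (i : ℕ) (hi : p.coeff i ≠ 0) : i = 0 ∨ m ≤ i := by
    by_contra! h
    have := X_pow_dvd_iff.mp hm i h.2
    exact hi (by simpa [coeff_one, h.1] using this)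
  have hjN : j ≤ N := (le_natDegree_of_ne_zero hj).trans hp.natDegree_le
  have hrefl := hlow (N - j) (by rwa [← revAt_le hjN, ← coeff_reflect, hp.reflect_eq])
  have := hlow j hj
  omega

theorem one_sub_X_pow_dvd (hp : IsFormallySelfDual N p) {m : ℕ} (hm : X ^ m ∣ p - 1) :
    (1 - X) ^ (4 * m) ∣ 4 ^ N * expand R 4 p - (1 + X) ^ (4 * N) := by
  have hdeg : (p - 1).natDegree ≤ N :=
    (natDegree_sub_le_iff_left (by simp)).mpr hp.natDegree_le
  have h := map_dvd (MvPolynomial.aeval ![(1 - X : R[X]) ^ 4, (1 + X) ^ 4])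
    (X_zero_pow_dvd_homogenize hm hdeg)
  simpa [hp.aeval_homogenize, ← pow_mul] using h

end IsFormallySelfDual

end FormallySelfDual

section GleasonGenerators

open Polynomial

variable {R : Type*} [CommRing R]

/-- The weight enumerator `1 + 14y⁴ + y⁸` of the extended Hamming code of length 8, written in the
variable `X = y⁴`. -/
noncomputable def hammingEnum {R : Type*} [Semiring R] : R[X] := 1 + 14 * X + X ^ 2

/-- Gleason's invariant `y⁴(1 - y⁴)⁴` of length 24, written in the variable `X = y⁴`. -/
noncomputable def gleasonDelta : R[X] := X * (1 - X) ^ 4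

theorem isFormallySelfDual_hammingEnum : IsFormallySelfDual 2 (hammingEnum : R[X]) where
  natDegree_le := by unfold hammingEnum; compute_degree
  reflect_eq := by
    ext i
    rw [coeff_reflect, hammingEnum]
    obtain hi | hi := le_or_gt i 2
    · rw [revAt_le hi]
      interval_cases i <;> simp [coeff_X, coeff_one, coeff_ofNat_mul, coeff_X_pow]
    · rw [revAt_eq_self_of_lt hi]
  aeval_homogenize := by
    have hhom : (MvPolynomial.X 1 ^ 2 + MvPolynomial.C 14 * (MvPolynomial.X 0 * MvPolynomial.X 1) +
        MvPolynomial.X 0 ^ 2 : MvPolynomial (Fin 2) R).IsHomogeneous 2 :=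
      ((MvPolynomial.isHomogeneous_X_pow 1 2).add (((MvPolynomial.isHomogeneous_X R 0).mul
        (MvPolynomial.isHomogeneous_X R 1)).C_mul 14)).add (MvPolynomial.isHomogeneous_X_pow 0 2)
    rw [homogenize_eq_of_isHomogeneous hhom (by simp [hammingEnum, map_ofNat])]
    simp only [hammingEnum, map_add, map_mul, map_pow, map_one, map_ofNat, MvPolynomial.aeval_X,
      Matrix.cons_val_zero, Matrix.cons_val_one, Matrix.cons_val_fin_one, expand_X]
    ring

theorem isFormallySelfDual_gleasonDelta : IsFormallySelfDual 6 (gleasonDelta : R[X]) where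
  natDegree_le := by unfold gleasonDelta; compute_degree!
  reflect_eq := by
    have h : (gleasonDelta : R[X]) = X - 4 * X ^ 2 + 6 * X ^ 3 - 4 * X ^ 4 + X ^ 5 := by
      unfold gleasonDelta; ring
    ext i
    rw [coeff_reflect, h]
    obtain hi | hi := le_or_gt i 6
    · rw [revAt_le hi]
      interval_cases i <;> simp [coeff_X, coeff_ofNat_mul, coeff_X_pow]
    · rw [revAt_eq_self_of_lt hi]
  aeval_homogenize := by
    have hhom : (MvPolynomial.X 0 * MvPolynomial.X 1 * (MvPolynomial.X 1 - MvPolynomial.X 0) ^ 4 :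
        MvPolynomial (Fin 2) R).IsHomogeneous 6 :=
      ((MvPolynomial.isHomogeneous_X R 0).mul (MvPolynomial.isHomogeneous_X R 1)).mul
        (((MvPolynomial.isHomogeneous_X R 1).sub (MvPolynomial.isHomogeneous_X R 0)).pow 4)
    rw [homogenize_eq_of_isHomogeneous hhom (by simp [gleasonDelta])]
    simp only [gleasonDelta, map_sub, map_mul, map_pow, map_one, MvPolynomial.aeval_X,
      Matrix.cons_val_zero, Matrix.cons_val_one, Matrix.cons_val_fin_one, expand_X]
    ring

end GleasonGenerators

section LagrangeInversion

open PowerSeries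

variable {R : Type*} [CommRing R]

theorem coeff_pow_mul_derivative [IsAddTorsionFree R] (v : R⟦X⟧) (n : ℕ) :
    coeff n (v ^ n * d⁄dX R v) = coeff (n + 1) (v ^ (n + 1)) := by
  have h := coeff_derivative (v ^ (n + 1)) n
  rw [derivative_pow, Nat.add_sub_cancel, mul_assoc, ← nsmul_eq_mul, map_nsmul, ← Nat.cast_succ,
    mul_comm (coeff _ _), ← nsmul_eq_mul] at h
  exact nsmul_right_injective n.succ_ne_zero h

theorem sq_mul_derivative_of_mul_eq_one {v w : R⟦X⟧} (hvw : v * w = 1) :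
    v ^ 2 * d⁄dX R w = -d⁄dX R v := by
  have h := congrArg (d⁄dX R) hvw
  rw [Derivation.leibniz, Derivation.map_one_eq_zero, smul_eq_mul, smul_eq_mul] at h
  linear_combination v * h - d⁄dX R v * hvw

-- With `z = X * w`, this coefficient is the residue of `z ^ (-k - 1) d(z ^ r)`, which is the
-- differential of a multiple of `z ^ (r - k - 1)`.
theorem coeff_pow_mul_derivative_X_mul_pow [IsAddTorsionFree R] {v w : R⟦X⟧} (hvw : v * w = 1)
    {k r : ℕ} (hr : r ≤ k) : coeff k (v ^ (k + 1) * d⁄dX R ((X * w) ^ r)) = 0 := by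
  obtain _ | r := r
  · simp
  obtain ⟨s, rfl⟩ := Nat.exists_eq_add_of_le hr
  have hpow : v ^ r * w ^ r = 1 := by rw [← mul_pow, hvw, one_pow]
  have hXw : v ^ 2 * d⁄dX R (X * w) = v - X * d⁄dX R v := by
    rw [Derivation.leibniz, derivative_X, smul_eq_mul, smul_eq_mul]
    linear_combination v * hvw + X * sq_mul_derivative_of_mul_eq_one hvw
  have hfactor : v ^ (r + 1 + s + 1) * d⁄dX R ((X * w) ^ (r + 1)) =
      (r + 1) • (X ^ r * (v ^ (s + 1) - X * (v ^ s * d⁄dX R v))) := by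
    rw [derivative_pow, Nat.add_sub_cancel, nsmul_eq_mul]
    linear_combination ((r + 1 : ℕ) : R⟦X⟧) * X ^ r * v ^ s *
      (v ^ 2 * d⁄dX R (X * w) * hpow + hXw)
  rw [hfactor, map_nsmul, show r + 1 + s = s + 1 + r by omega, coeff_X_pow_mul, map_sub,
    coeff_succ_X_mul, coeff_pow_mul_derivative, sub_self, smul_zero]

theorem coeff_mul_of_X_pow_dvd {f g : R⟦X⟧} {n : ℕ} (hg : X ^ n ∣ g) :
    coeff n (f * g) = constantCoeff f * coeff n g := by
  obtain ⟨h, rfl⟩ := hg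
  rw [mul_left_comm]
  simp [coeff_X_pow_mul']

theorem mul_derivative_mul_pow_sub (S F : R⟦X⟧) (k : ℕ) :
    F * d⁄dX R (S * F ^ k) - k • (S * F ^ k * d⁄dX R F) = F ^ (k + 1) * d⁄dX R S := by
  obtain _ | k := k
  · simp
  · rw [Derivation.leibniz, derivative_pow, smul_eq_mul, smul_eq_mul, nsmul_eq_mul,
      Nat.add_sub_cancel]
    ring

theorem sum_C_mul_X_mul_pow_mul_pow_eq {F f G : R⟦X⟧} (hF : F * f = 1) (a : ℕ → R) (k : ℕ) :
    ∑ i ∈ antidiagonal k, C (a i.1) * ((X * G) ^ i.1 * F ^ i.2) =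
      (∑ r ∈ range (k + 1), C (a r) * (X * (G * f)) ^ r) * F ^ k := by
  rw [Nat.sum_antidiagonal_eq_sum_range_succ_mk, sum_mul]
  refine sum_congr rfl fun r hr => ?_
  obtain ⟨s, rfl⟩ := Nat.exists_eq_add_of_le (mem_range_succ_iff.mp hr)
  have hpow : F ^ r * f ^ r = 1 := by rw [← mul_pow, hF, one_pow]
  rw [Nat.add_sub_cancel_left]
  linear_combination -(C (a r) * (X * G) ^ r * F ^ s) * hpow

theorem coeff_pow_mul_mul_derivative_sub_eq_zero [IsAddTorsionFree R] {F f G g : R⟦X⟧}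
    (hF : F * f = 1) (hG : g * G = 1) (a : ℕ → R) {k : ℕ} {W : R⟦X⟧}
    (hW : W = ∑ i ∈ antidiagonal k, C (a i.1) * ((X * G) ^ i.1 * F ^ i.2)) :
    coeff k (g ^ (k + 1) * (F * d⁄dX R W - k • (W * d⁄dX R F))) = 0 := by
  have hinv : F * g * (G * f) = 1 := by linear_combination F * f * hG + hF
  rw [hW, sum_C_mul_X_mul_pow_mul_pow_eq hF, mul_derivative_mul_pow_sub, ← mul_assoc, ← mul_pow,
    mul_comm g, map_sum, mul_sum, map_sum]
  refine sum_eq_zero fun r hr => ?_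
  rw [← smul_eq_C_mul, Derivation.map_smul, mul_smul_comm, map_smul,
    coeff_pow_mul_derivative_X_mul_pow hinv (mem_range_succ_iff.mp hr), smul_zero]

theorem constantCoeff_mul_coeff_succ_of_X_pow_dvd_sub_one [IsAddTorsionFree R] {F f G g : R⟦X⟧}
    (hF : F * f = 1) (hG : g * G = 1) (a : ℕ → R) {k : ℕ} {W : R⟦X⟧}
    (hW : W = ∑ i ∈ antidiagonal k, C (a i.1) * ((X * G) ^ i.1 * F ^ i.2))
    (hdvd : X ^ (k + 1) ∣ W - 1) :
    constantCoeff (g ^ (k + 1) * F) * (coeff (k + 1) W * (k + 1)) =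
      k * coeff k (g ^ (k + 1) * d⁄dX R F) := by
  have hdvd' : X ^ k ∣ d⁄dX R W := by
    refine X_pow_dvd_iff.mpr fun j hj => ?_
    have h := X_pow_dvd_iff.mp hdvd (j + 1) (by omega)
    rw [map_sub, coeff_one, if_neg j.succ_ne_zero, sub_zero] at h
    rw [coeff_derivative, h, zero_mul]
  have hrest : coeff k (g ^ (k + 1) * (W * d⁄dX R F)) = coeff k (g ^ (k + 1) * d⁄dX R F) := by
    rw [← sub_eq_zero, ← map_sub, ← mul_sub, ← sub_one_mul, mul_left_comm]
    exact X_pow_dvd_iff.mp (hdvd.mul_right _) k k.lt_succ_self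
  have h := coeff_pow_mul_mul_derivative_sub_eq_zero hF hG a hW
  rw [mul_sub, ← mul_assoc, map_sub, coeff_mul_of_X_pow_dvd hdvd', coeff_derivative,
    mul_smul_comm, map_nsmul, sub_eq_zero] at h
  rw [h, hrest, nsmul_eq_mul]

end LagrangeInversion

section PowerSeriesCoefficients

open PowerSeries

theorem coeff_mk_one_pow_mul_pos {R : Type*} [CommRing R] [PartialOrder R] [IsStrictOrderedRing R]
    {f : R⟦X⟧} (hf : ∀ n, 0 ≤ coeff n f) (hf₀ : 0 < constantCoeff f) (d n : ℕ) :
    0 < coeff n ((mk 1 : R⟦X⟧) ^ (d + 1) * f) := by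
  have hpos (j : ℕ) : 0 < coeff j ((mk 1 : R⟦X⟧) ^ (d + 1)) := by
    rw [mk_one_pow_eq_mk_choose_add, coeff_mk]
    exact_mod_cast Nat.choose_pos (Nat.le_add_right d j)
  rw [coeff_mul]
  refine sum_pos' (fun i _ => mul_nonneg (hpos _).le (hf _)) ⟨(n, 0), by simp, ?_⟩
  exact mul_pos (hpos n) (by simpa using hf₀)

end PowerSeriesCoefficients

section GleasonSums

open Polynomial
open scoped PowerSeries

theorem exists_X_pow_dvd_sum_sub {R : Type*} [CommRing R] {g : ℕ → R[X]}
    (hg : ∀ r, (g r).coeff 0 = 1) (q : R[X]) (m : ℕ) :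
    ∃ a : ℕ → R, X ^ m ∣ ∑ r ∈ range m, C (a r) * (X ^ r * g r) - q := by
  induction m generalizing g q with
  | zero => exact ⟨0, by simp⟩
  | succ m ih =>
    obtain ⟨q', hq'⟩ : X ∣ q - C (q.coeff 0) * g 0 := by simp [X_dvd_iff, hg]
    obtain ⟨a, ha⟩ := ih (fun r => hg (r + 1)) q'
    refine ⟨fun r => r.casesOn (q.coeff 0) a, ?_⟩
    convert mul_dvd_mul_left X ha using 1
    · exact pow_succ' X m
    · rw [mul_sub, ← hq', sum_range_succ', mul_sum, pow_zero, one_mul, ← sub_add,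
        sub_add_eq_add_sub]
      congr 2
      exact sum_congr rfl fun r _ => by ring

variable {R : Type*} [CommRing R]

/-- The general combination of Gleason's invariants of length `24k`, written in the variable
`X = y⁴`. -/
noncomputable def gleasonSum (k : ℕ) (a : ℕ → R) : R[X] :=
  ∑ i ∈ antidiagonal k, C (a i.1) * (gleasonDelta ^ i.1 * (hammingEnum ^ 3) ^ i.2)

theorem isFormallySelfDual_gleasonSum (k : ℕ) (a : ℕ → R) :
    IsFormallySelfDual (6 * k) (gleasonSum k a) := by
  refine .sum_C_mul _ fun i hi => ?_
  rw [← mem_antidiagonal.mp hi, mul_add]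
  exact (isFormallySelfDual_gleasonDelta.pow _).mul ((isFormallySelfDual_hammingEnum.pow 3).pow _)

theorem exists_X_pow_dvd_gleasonSum_sub_one (k : ℕ) :
    ∃ a : ℕ → R, X ^ (k + 1) ∣ gleasonSum k a - 1 := by
  obtain ⟨a, ha⟩ := exists_X_pow_dvd_sum_sub
    (g := fun r => ((1 - X : R[X]) ^ 4) ^ r * (hammingEnum ^ 3) ^ (k - r))
    (fun r => by simp [coeff_zero_eq_eval_zero, hammingEnum]) 1 (k + 1)
  refine ⟨a, ?_⟩
  simpa only [gleasonSum, Nat.sum_antidiagonal_eq_sum_range_succ_mk, gleasonDelta, mul_pow,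
    mul_assoc] using ha

theorem map_hammingEnum {R S : Type*} [Semiring R] [Semiring S] (f : R →+* S) :
    (hammingEnum : R[X]).map f = hammingEnum := by
  simp [hammingEnum]

theorem coeff_mk_one_pow_mul_derivative_hammingEnum_pow_pos (d n : ℕ) :
    0 < PowerSeries.coeff n ((PowerSeries.mk 1 : ℚ⟦X⟧) ^ (d + 1) *
      PowerSeries.derivative ℚ (((hammingEnum : ℚ[X]) : ℚ⟦X⟧) ^ 3)) := by
  rw [← Polynomial.coe_pow, PowerSeries.derivative_coe]
  refine coeff_mk_one_pow_mul_pos (fun j => ?_) ?_ d n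
  · rw [Polynomial.coeff_coe, ← map_hammingEnum (Nat.castRingHom ℚ), ← Polynomial.map_pow,
      derivative_map, coeff_map]
    exact Nat.cast_nonneg _
  · simp [hammingEnum, derivative_pow]

theorem coeff_gleasonSum_ne_zero {k : ℕ} (hk : 0 < k) {a : ℕ → ℚ}
    (ha : X ^ (k + 1) ∣ gleasonSum k a - 1) : (gleasonSum k a).coeff (k + 1) ≠ 0 := by
  have hF : ((hammingEnum : ℚ[X]) : ℚ⟦X⟧) ^ 3 * (((hammingEnum : ℚ[X]) : ℚ⟦X⟧) ^ 3)⁻¹ = 1 :=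
    PowerSeries.mul_inv_cancel _ (by simp [hammingEnum])
  have hG : (PowerSeries.mk 1 : ℚ⟦X⟧) ^ 4 * (1 - PowerSeries.X) ^ 4 = 1 := by
    rw [← mul_pow, PowerSeries.mk_one_mul_one_sub_eq_one, one_pow]
  have hW : (gleasonSum k a : ℚ⟦X⟧) = ∑ i ∈ antidiagonal k, PowerSeries.C (a i.1) *
      ((PowerSeries.X * (1 - PowerSeries.X) ^ 4) ^ i.1 *
        (((hammingEnum : ℚ[X]) : ℚ⟦X⟧) ^ 3) ^ i.2) := by
    rw [gleasonSum, ← coeToPowerSeries.ringHom_apply, map_sum]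
    simp [gleasonDelta]
  have hdvd : PowerSeries.X ^ (k + 1) ∣ (gleasonSum k a : ℚ⟦X⟧) - 1 := by
    simpa using map_dvd (coeToPowerSeries.ringHom (R := ℚ)) ha
  have h := constantCoeff_mul_coeff_succ_of_X_pow_dvd_sub_one hF hG a hW hdvd
  have hpos := coeff_mk_one_pow_mul_derivative_hammingEnum_pow_pos (4 * k + 3) k
  rw [Polynomial.coeff_coe, ← pow_mul, show 4 * (k + 1) = 4 * k + 3 + 1 by ring] at h
  intro h0
  rw [h0, zero_mul, mul_zero] at h
  exact (mul_pos (Nat.cast_pos.mpr hk) hpos).ne h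

end GleasonSums

section ExtremalWeightEnumerators

open Polynomial

theorem exists_hWt_eq_of_coeff_weightEnum_ne_zero {ι R : Type*} [Fintype ι] [CommRing R]
    {S : Set (ι → ZMod 2)} {j : ℕ} (hj : (weightEnum S 1 (X : R[X])).coeff j ≠ 0) :
    ∃ c ∈ S, hWt c = j := by
  classical
  rw [coeff_weightEnum_one_X] at hj
  obtain ⟨c, hc⟩ := card_ne_zero.mp fun h => hj (by rw [h, Nat.cast_zero])
  exact ⟨c, (mem_filter.mp hc).2⟩

theorem minHam_eq_hWt {ι : Type*} [Fintype ι] {S : Set (ι → ZMod 2)} {c : ι → ZMod 2}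
    (hc : c ∈ S) (hc₀ : c ≠ 0) (hmin : ∀ x ∈ S, x ≠ 0 → hWt c ≤ hWt x) : minHam S = hWt c := by
  refine le_antisymm (Nat.sInf_le ⟨c, hc, hc₀, rfl⟩) (le_csInf ⟨_, c, hc, hc₀, rfl⟩ ?_)
  rintro _ ⟨x, hx, hx₀, rfl⟩
  exact hmin x hx hx₀

/-- The weights that can occur in a doubly even code of length `24k` whose dual has minimum weight
greater than `4k`. -/
def extremalWeights (k : ℕ) : Finset ℕ := ({0, 6 * k} ∪ Icc (k + 1) (5 * k - 1)).image (4 * ·)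

theorem card_extremalWeights_le (k : ℕ) : #(extremalWeights k) ≤ 4 * k + 1 := by
  have himage : #(extremalWeights k) ≤ #({0, 6 * k} ∪ Icc (k + 1) (5 * k - 1)) := card_image_le
  have hunion := card_union_le {0, 6 * k} (Icc (k + 1) (5 * k - 1))
  have hpair := card_le_two (a := 0) (b := 6 * k)
  rw [Nat.card_Icc] at hunion
  obtain rfl | hk := k.eq_zero_or_pos
  · decide
  · omega

theorem four_mul_mem_extremalWeights {k j : ℕ}
    (hj : j = 0 ∨ j = 6 * k ∨ k + 1 ≤ j ∧ j + (k + 1) ≤ 6 * k) : 4 * j ∈ extremalWeights k := by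
  refine mem_image_of_mem _ ?_
  simp only [mem_union, mem_insert, mem_singleton, mem_Icc]
  omega

theorem IsFormallySelfDual.support_expand_subset_extremalWeights {R : Type*} [CommRing R]
    {p : R[X]} {k : ℕ} (hp : IsFormallySelfDual (6 * k) p) (hdvd : X ^ (k + 1) ∣ p - 1) :
    (expand R 4 p).support ⊆ extremalWeights k := by
  intro j hj
  rw [mem_support_iff, coeff_expand four_pos, ite_ne_right_iff] at hj
  obtain ⟨⟨i, rfl⟩, hi⟩ := hj
  rw [Nat.mul_div_cancel_left _ four_pos] at hi
  exact four_mul_mem_extremalWeights (hp.eq_zero_or_eq_or_le_of_coeff_ne_zero hdvd hi)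

section DoublyEvenCodes

variable {ι : Type*} [Fintype ι] {k : ℕ} {B : Submodule (ZMod 2) (ι → ZMod 2)}

theorem DoublyEven.hWt_mem_extremalWeights (hcard : Fintype.card ι = 24 * k)
    (hB : DoublyEven (B : Set (ι → ZMod 2)))
    (hmin : ∀ u ∈ dual2 (B : Set (ι → ZMod 2)), u ≠ 0 → 4 * k + 1 ≤ hWt u)
    {c : ι → ZMod 2} (hc : c ∈ B) : hWt c ∈ extremalWeights k := by
  obtain ⟨j, hj⟩ := hB c hc
  have hc' := hB.subset_dual2 hc
  have hlow : hWt c = 0 ∨ 4 * k + 1 ≤ hWt c :=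
    (eq_or_ne c 0).imp hWt_eq_zero.mpr (hmin c hc')
  have hhigh : hWt (1 + c) = 0 ∨ 4 * k + 1 ≤ hWt (1 + c) :=
    (eq_or_ne (1 + c) 0).imp hWt_eq_zero.mpr (hmin _ (hB.one_add_mem_dual2 hc'))
  have hcompl := hWt_one_add_add_hWt c
  rw [hj]
  exact four_mul_mem_extremalWeights (by omega)

theorem one_sub_X_pow_dvd_two_pow_mul_weightEnum_sub {R : Type*} [CommRing R] {d : ℕ}
    (hmin : ∀ u ∈ dual2 (B : Set (ι → ZMod 2)), u ≠ 0 → d ≤ hWt u) :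
    (1 - X : R[X]) ^ d ∣ 2 ^ Fintype.card ι * weightEnum (B : Set (ι → ZMod 2)) 1 X -
      (Nat.card B : R[X]) * (1 + X) ^ Fintype.card ι := by
  rw [two_pow_mul_weightEnum_one_X, ← mul_sub]
  exact (pow_dvd_weightEnum_sub_pow (zero_mem_dual2 _) hmin _ _).mul_left _

theorem one_sub_X_pow_dvd_weightEnum_sub_expand {R : Type*} [CommRing R]
    (hcard : Fintype.card ι = 24 * k)
    (hmin : ∀ u ∈ dual2 (B : Set (ι → ZMod 2)), u ≠ 0 → 4 * k + 1 ≤ hWt u) {W : R[X]}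
    (hW : IsFormallySelfDual (6 * k) W) (hdvd : X ^ (k + 1) ∣ W - 1) :
    (1 - X) ^ (4 * k + 1) ∣ C (2 ^ (24 * k)) * weightEnum (B : Set (ι → ZMod 2)) 1 X -
      C (2 ^ (12 * k) * (Nat.card B : R)) * expand R 4 W := by
  have hcode := one_sub_X_pow_dvd_two_pow_mul_weightEnum_sub (R := R) hmin
  have hgleason := (pow_dvd_pow (1 - X) (by omega : 4 * k + 1 ≤ 4 * (k + 1))).trans
    (hW.one_sub_X_pow_dvd hdvd)
  have hpow : (4 : R[X]) ^ (6 * k) = 2 ^ (12 * k) := by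
    rw [show (4 : R[X]) = 2 ^ 2 by norm_num, ← pow_mul]
    congr 1
    ring
  convert dvd_sub hcode (hgleason.mul_left (Nat.card B : R[X])) using 1
  rw [hcard, hpow]
  simp only [map_mul, map_pow, map_ofNat, map_natCast]
  ring

theorem DoublyEven.support_weightEnum_subset_extremalWeights {R : Type*} [CommRing R]
    (hcard : Fintype.card ι = 24 * k) (hB : DoublyEven (B : Set (ι → ZMod 2)))
    (hmin : ∀ u ∈ dual2 (B : Set (ι → ZMod 2)), u ≠ 0 → 4 * k + 1 ≤ hWt u) :
    (weightEnum (B : Set (ι → ZMod 2)) 1 (X : R[X])).support ⊆ extremalWeights k := by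
  intro j hj
  obtain ⟨c, hc, rfl⟩ := exists_hWt_eq_of_coeff_weightEnum_ne_zero (mem_support_iff.mp hj)
  exact hB.hWt_mem_extremalWeights hcard hmin hc

variable {W : ℚ[X]}

theorem DoublyEven.two_pow_mul_weightEnum_eq (hcard : Fintype.card ι = 24 * k)
    (hB : DoublyEven (B : Set (ι → ZMod 2)))
    (hmin : ∀ u ∈ dual2 (B : Set (ι → ZMod 2)), u ≠ 0 → 4 * k + 1 ≤ hWt u)
    (hW : IsFormallySelfDual (6 * k) W) (hdvd : X ^ (k + 1) ∣ W - 1) :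
    C (2 ^ (24 * k)) * weightEnum (B : Set (ι → ZMod 2)) 1 X =
      C (2 ^ (12 * k) * (Nat.card B : ℚ)) * expand ℚ 4 W := by
  rw [← sub_eq_zero]
  refine eq_zero_of_X_sub_C_pow_dvd_of_card_support_le (η := 1) (m := 4 * k + 1) one_pos ?_ ?_
  · have hassoc : Associated (X - C 1 : ℚ[X]) (1 - X) := by
      rw [C_1, ← neg_sub]
      exact (Associated.refl _).neg_left
    exact hassoc.pow_pow.dvd.trans (one_sub_X_pow_dvd_weightEnum_sub_expand hcard hmin hW hdvd)
  · refine (card_le_card fun j hj => ?_).trans (card_extremalWeights_le k)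
    by_contra hjk
    have hcode := notMem_support_iff.mp
      (mt (hB.support_weightEnum_subset_extremalWeights (R := ℚ) hcard hmin ·) hjk)
    have hgleason := notMem_support_iff.mp
      (mt (hW.support_expand_subset_extremalWeights hdvd ·) hjk)
    exact mem_support_iff.mp hj (by rw [coeff_sub, coeff_C_mul, coeff_C_mul, hcode, hgleason,
      mul_zero, mul_zero, sub_zero])

theorem DoublyEven.natCard_eq (hcard : Fintype.card ι = 24 * k)
    (hB : DoublyEven (B : Set (ι → ZMod 2)))
    (hmin : ∀ u ∈ dual2 (B : Set (ι → ZMod 2)), u ≠ 0 → 4 * k + 1 ≤ hWt u) :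
    Nat.card B = 2 ^ (12 * k) := by
  obtain ⟨a, ha⟩ := exists_X_pow_dvd_gleasonSum_sub_one (R := ℚ) k
  have hcode : (weightEnum (B : Set (ι → ZMod 2)) 1 (X : ℚ[X])).coeff 0 = 1 := by
    simpa [X_dvd_iff, sub_eq_zero] using dvd_weightEnum_sub_pow B.zero_mem 1 (X : ℚ[X])
  have hgleason : (gleasonSum k a).coeff 0 = 1 := by
    simpa [sub_eq_zero] using X_pow_dvd_iff.mp ha 0 k.succ_pos
  have h := congrArg (coeff · 0)
    (hB.two_pow_mul_weightEnum_eq hcard hmin (isFormallySelfDual_gleasonSum k a) ha)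
  simp only [coeff_C_mul, hcode, coeff_expand four_pos, dvd_zero, if_true, Nat.zero_div, hgleason,
    mul_one] at h
  rw [show 24 * k = 12 * k + 12 * k by ring, pow_add] at h
  exact_mod_cast (mul_left_cancel₀ (by positivity) h).symm

theorem DoublyEven.weightEnum_eq_expand (hcard : Fintype.card ι = 24 * k)
    (hB : DoublyEven (B : Set (ι → ZMod 2)))
    (hmin : ∀ u ∈ dual2 (B : Set (ι → ZMod 2)), u ≠ 0 → 4 * k + 1 ≤ hWt u)
    (hW : IsFormallySelfDual (6 * k) W) (hdvd : X ^ (k + 1) ∣ W - 1) :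
    weightEnum (B : Set (ι → ZMod 2)) 1 X = expand ℚ 4 W := by
  have h := hB.two_pow_mul_weightEnum_eq hcard hmin hW hdvd
  rw [hB.natCard_eq hcard hmin, Nat.cast_pow, Nat.cast_ofNat, ← pow_add, ← add_mul] at h
  exact mul_left_cancel₀ (C_ne_zero.mpr (by positivity)) h

theorem DoublyEven.eq_dual2 (hcard : Fintype.card ι = 24 * k)
    (hB : DoublyEven (B : Set (ι → ZMod 2)))
    (hmin : ∀ u ∈ dual2 (B : Set (ι → ZMod 2)), u ≠ 0 → 4 * k + 1 ≤ hWt u) :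
    (B : Set (ι → ZMod 2)) = dual2 (B : Set (ι → ZMod 2)) := by
  refine eq_dual2_of_card_mul_self hB.subset_dual2 ?_
  rw [hB.natCard_eq hcard hmin, hcard, ← pow_add, ← add_mul]

theorem DoublyEven.minHam_eq (hcard : Fintype.card ι = 24 * k) (hk : 0 < k)
    (hB : DoublyEven (B : Set (ι → ZMod 2)))
    (hmin : ∀ u ∈ dual2 (B : Set (ι → ZMod 2)), u ≠ 0 → 4 * k + 1 ≤ hWt u) :
    minHam (B : Set (ι → ZMod 2)) = 4 * k + 4 := by
  obtain ⟨a, ha⟩ := exists_X_pow_dvd_gleasonSum_sub_one (R := ℚ) k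
  have hne : (weightEnum (B : Set (ι → ZMod 2)) 1 (X : ℚ[X])).coeff ((k + 1) * 4) ≠ 0 := by
    rw [hB.weightEnum_eq_expand hcard hmin (isFormallySelfDual_gleasonSum k a) ha,
      coeff_expand_mul four_pos]
    exact coeff_gleasonSum_ne_zero hk ha
  obtain ⟨c, hc, hwt⟩ := exists_hWt_eq_of_coeff_weightEnum_ne_zero hne
  have hc₀ : c ≠ 0 := mt hWt_eq_zero.mpr (by omega)
  rw [minHam_eq_hWt hc hc₀ fun x hx hx₀ => ?_]
  · omega
  · have := hmin x (hB.subset_dual2 hx) hx₀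
    have := hB x hx
    omega

end DoublyEvenCodes

end ExtremalWeightEnumerators

section ResidueCodes

variable {ι : Type*} [Fintype ι]

theorem doublyEven_residue {C : Set (ι → ZMod 4)} (hC : C ⊆ dualZ4 C) :
    DoublyEven (residue C) := by
  rintro _ ⟨x, hx, rfl⟩
  have hval (a : ZMod 4) :
      ((ZMod.castHom (by norm_num : 2 ∣ 4) (ZMod 2) a).val : ZMod 4) = a * a := by
    decide +revert
  rw [← ZMod.natCast_eq_zero_iff, hWt_eq_sum, Nat.cast_sum, ← hC hx x hx]
  exact sum_congr rfl fun i _ => hval (x i)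

/-- The residue code `C⁽¹⁾` of a linear code `C`, as a linear code. -/
def residueCode (C : Submodule (ZMod 4) (ι → ZMod 4)) : Submodule (ZMod 2) (ι → ZMod 2) :=
  haveI : RingHomSurjective (ZMod.castHom (by norm_num : 2 ∣ 4) (ZMod 2)) :=
    ⟨ZMod.castHom_surjective _⟩
  C.map
    { toFun := res2
      map_add' := fun x y => funext fun i => map_add _ (x i) (y i)
      map_smul' := fun r x => funext fun i => map_mul _ r (x i) }

/-- The embedding of `ZMod 2` onto the ideal `2 ZMod 4`. -/
def doubling : ZMod 2 →+ ZMod 4 where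
  toFun b := 2 * b.cast
  map_zero' := rfl
  map_add' := by decide

theorem doubling_comp_mem_dualZ4 {C : Set (ι → ZMod 4)} {u : ι → ZMod 2}
    (hu : u ∈ dual2 (residue C)) : doubling ∘ u ∈ dualZ4 C := by
  intro y hy
  have hmul (b : ZMod 2) (a : ZMod 4) : doubling b * a =
      doubling (b * ZMod.castHom (by norm_num : 2 ∣ 4) (ZMod 2) a) := by
    decide +revert
  have h : ∑ i, u i * res2 y i = 0 := hu _ ⟨y, hy, rfl⟩
  simp only [Function.comp_apply, hmul, ← map_sum]
  rw [← map_zero doubling, ← h]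
  rfl

theorem leeWt_doubling_comp (u : ι → ZMod 2) : leeWt (doubling ∘ u) = 2 * hWt u := by
  have hval (b : ZMod 2) : leeVal (doubling b) = 2 * b.val := by decide +revert
  simp only [leeWt, hWt_eq_sum, mul_sum, Function.comp_apply, hval]

theorem minLee_le_two_mul_hWt {C : Set (ι → ZMod 4)} (hC : dualZ4 C ⊆ C) {u : ι → ZMod 2}
    (hu : u ∈ dual2 (residue C)) (hu₀ : u ≠ 0) : minLee C ≤ 2 * hWt u := by
  have hinj : Function.Injective doubling := by decide
  refine Nat.sInf_le ⟨doubling ∘ u, hC (doubling_comp_mem_dualZ4 hu), fun h => hu₀ ?_,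
    leeWt_doubling_comp u⟩
  exact hinj.comp_left (h.trans (funext fun _ => (map_zero doubling).symm))

theorem nonempty_of_minLee_pos {C : Set (ι → ZMod 4)} (hC : 0 < minLee C) : Nonempty ι := by
  by_contra hι
  rw [not_nonempty_iff] at hι
  obtain ⟨_, x, _, hx, _⟩ := Nat.nonempty_of_pos_sInf hC
  exact hx (Subsingleton.elim _ _)

end ResidueCodes

end Z4Note

open Z4Note in
theorem residue_of_selfdual_Z4_length24k_general {ι : Type*} [Fintype ι] {k : ℕ}
    (hcard : Fintype.card ι = 24 * k) (C : Submodule (ZMod 4) (ι → ZMod 4)) (hsd : SelfDualZ4 C)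
    (hlee : 8 * k + 1 ≤ minLee (C : Set (ι → ZMod 4))) :
    residue (C : Set (ι → ZMod 4)) = dual2 (residue (C : Set (ι → ZMod 4))) ∧
    DoublyEven (residue (C : Set (ι → ZMod 4))) ∧
    minHam (residue (C : Set (ι → ZMod 4))) = 4 * k + 4 := by
  have hk : 0 < k := by
    have := Fintype.card_pos_iff.mpr (nonempty_of_minLee_pos (lt_of_lt_of_le (8 * k).succ_pos hlee))
    omega
  have heven : DoublyEven (residueCode C : Set (ι → ZMod 2)) := doublyEven_residue hsd.subset
  have hmin : ∀ u ∈ dual2 (residueCode C : Set (ι → ZMod 2)), u ≠ 0 → 4 * k + 1 ≤ hWt u := by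
    intro u hu hu₀
    have := minLee_le_two_mul_hWt hsd.superset hu hu₀
    omega
  exact ⟨heven.eq_dual2 hcard hmin, heven, heven.minHam_eq hcard hk hmin⟩

open Z4Note in
/-- the residue code of a self-dual `ZMod 4`-code of length `24k` and
minimum Lee weight `8k+4` or `8k+2` is a binary extremal doubly even self-dual code. -/
theorem residue_of_selfdual_Z4_length24k
    (k : ℕ) (hk : 0 < k)
    (C : Submodule (ZMod 4) (Fin (24 * k) → ZMod 4))
    (hsd : SelfDualZ4 C)
    (hlee : minLee (C : Set (Fin (24 * k) → ZMod 4)) = 8 * k + 4 ∨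
            minLee (C : Set (Fin (24 * k) → ZMod 4)) = 8 * k + 2) :
    residue (C : Set (Fin (24 * k) → ZMod 4)) =
        dual2 (residue (C : Set (Fin (24 * k) → ZMod 4))) ∧
    DoublyEven (residue (C : Set (Fin (24 * k) → ZMod 4))) ∧
    minHam (residue (C : Set (Fin (24 * k) → ZMod 4))) = 4 * k + 4 :=
  residue_of_selfdual_Z4_length24k_general (Fintype.card_fin _) C hsd (by omega)
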